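/- Let O ⊂ ℝ³ be open, ω > 0, and let γ₁, γ₂, μ₁, μ₂ be nonvanishing C² complex functions on O with chosen logarithms α_j = log γ_j, β_j = log μ_j and square roots u = (γ₁/γ₂)^{1/2}, v = (μ₁/μ₂)^{1/2}. Suppose that in O one has −(1/2)Δ(α₁ − α₂) + (1/4) D(α₁ + α₂)·D(α₁ − α₂) + ω²(μ₁γ₁ − μ₂γ₂) = 0 and −(1/2)Δ(β₁ − β₂) + (1/4) D(β₁ + β₂)·D(β₁ − β₂) + ω²(μ₁γ₁ − μ₂γ₂) = 0. Then u and v satisfy the semilinear elliptic system D·(γ₂ Du) + ω² μ₂ γ₂² (u²v² − 1) u = 0 and D·(μ₂ Dv) + ω² μ₂² γ₂ (u²v² − 1) v = 0 in O. -/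

import Mathlib

/-!
Put `φ = (α₁ - α₂)/2`, so that `u = exp φ` and `γ₂ = exp α₂`. Then `γ₂ ∇u = exp((α₁ + α₂)/2) ∇φ`,
and taking the divergence gives
`D·(γ₂ Du) = -γ₂ u (½ Δ(α₁ - α₂) + ¼ ∇(α₁ + α₂)·∇(α₁ - α₂))` (`Ddiva_exp`).
Since `Da·Db = -∇a·∇b`, the scalar identity for `α` says that the bracket equals
`ω² (μ₁γ₁ - μ₂γ₂)`, and `μ₁γ₁ = μ₂γ₂ u²v²` turns this into the semilinear equation for `u`
(`semilinear_of_identity`). The equation for `v` is the same fact with the roles of `γ` and `μ`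
exchanged.
-/

/- STATEMENT 18: from the integral identities to the semilinear elliptic system
(Section 5 of Caro-Ola-Salo). -/


noncomputable section

open Set Filter Topology

/-- Points of `ℝ³`. -/
abbrev V3 : Type := Fin 3 → ℝ
/-- Values of complex vector fields on `ℝ³`. -/
abbrev CV3 : Type := Fin 3 → ℂ

/-- Partial derivative of a complex valued function on `ℝ³`. -/
def pd (i : Fin 3) (f : V3 → ℂ) (x : V3) : ℂ := fderiv ℝ f x (Pi.single i 1)

/-- Bilinear dot product on `ℂ³`. -/
def dotC (a b : CV3) : ℂ := ∑ i, a i * b i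

/-- The vector `D f = -i ∇f`. -/
def Dg (f : V3 → ℂ) (x : V3) : CV3 := fun i => -Complex.I * pd i f x

/-- The Laplacian of a complex valued function. -/
def lapC (f : V3 → ℂ) (x : V3) : ℂ := ∑ i, pd i (fun y => pd i f y) x

/-- The operator `D·(a D u) = -∇·(a∇u)`, where `D = -i∇`. -/
def Ddiva (a u : V3 → ℂ) (x : V3) : ℂ :=
  ∑ j, -Complex.I * pd j (fun y => a y * (-Complex.I * pd j u y)) x

theorem pd_differentiableAt {O : Set V3} (hO : IsOpen O) {a : V3 → ℂ} (ha : ContDiffOn ℝ 2 a O)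
    {x : V3} (hx : x ∈ O) (j : Fin 3) : DifferentiableAt ℝ (fun y => pd j a y) x := by
  have h : ContDiffOn ℝ 1 (fderiv ℝ a) O := ha.fderiv_of_isOpen hO (by norm_num)
  have h' := (h.differentiableOn (by norm_num)).differentiableAt (hO.mem_nhds hx)
  exact h'.clm_apply (differentiableAt_const _)

theorem pd_congr {f g : V3 → ℂ} {x : V3} (h : f =ᶠ[𝓝 x] g) (j : Fin 3) :
    pd j f x = pd j g x := by
  unfold pd
  rw [h.fderiv_eq]

theorem pd_mul {f g : V3 → ℂ} {x : V3} (hf : DifferentiableAt ℝ f x)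
    (hg : DifferentiableAt ℝ g x) (j : Fin 3) :
    pd j (fun y => f y * g y) x = f x * pd j g x + g x * pd j f x := by
  unfold pd
  rw [fderiv_fun_mul hf hg]
  simp

theorem pd_const_mul {f : V3 → ℂ} {x : V3} (hf : DifferentiableAt ℝ f x) (c : ℂ) (j : Fin 3) :
    pd j (fun y => c * f y) x = c * pd j f x := by
  unfold pd
  rw [(hf.hasFDerivAt.const_mul c).fderiv]
  simp

theorem pd_add {f g : V3 → ℂ} {x : V3} (hf : DifferentiableAt ℝ f x)
    (hg : DifferentiableAt ℝ g x) (j : Fin 3) :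
    pd j (fun y => f y + g y) x = pd j f x + pd j g x := by
  unfold pd
  rw [fderiv_fun_add hf hg]
  simp

theorem pd_sub {f g : V3 → ℂ} {x : V3} (hf : DifferentiableAt ℝ f x)
    (hg : DifferentiableAt ℝ g x) (j : Fin 3) :
    pd j (fun y => f y - g y) x = pd j f x - pd j g x := by
  unfold pd
  rw [fderiv_fun_sub hf hg]
  simp

theorem pd_cexp {f : V3 → ℂ} {x : V3} (hf : DifferentiableAt ℝ f x) (j : Fin 3) :
    pd j (fun y => Complex.exp (f y)) x = Complex.exp (f x) * pd j f x := by
  unfold pd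
  rw [hf.hasFDerivAt.cexp.fderiv]
  simp

/-- For `g = exp a₂` and `w = exp((a₁ - a₂)/2)` one has
`D·(g Dw) = -g w (½ Δ(a₁ - a₂) + ¼ ∇(a₁ + a₂)·∇(a₁ - a₂))`; the dot product is written with
`D = -i∇`, which flips its sign. -/
theorem Ddiva_exp {O : Set V3} (hO : IsOpen O) {a₁ a₂ g w : V3 → ℂ}
    (ha₁ : ContDiffOn ℝ 2 a₁ O) (ha₂ : ContDiffOn ℝ 2 a₂ O)
    (hg : ∀ x ∈ O, Complex.exp (a₂ x) = g x)
    (hw : ∀ x, w x = Complex.exp ((a₁ x - a₂ x) / 2)) {x : V3} (hx : x ∈ O) :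
    Ddiva g w x = g x * w x * (-(1/2 : ℂ) * (lapC a₁ x - lapC a₂ x)
        + (1/4 : ℂ) * dotC (fun i => Dg a₁ x i + Dg a₂ x i) (fun i => Dg a₁ x i - Dg a₂ x i)) := by
  have d₁ : ∀ y ∈ O, DifferentiableAt ℝ a₁ y := fun y hy =>
    (ha₁.differentiableOn (by norm_num)).differentiableAt (hO.mem_nhds hy)
  have d₂ : ∀ y ∈ O, DifferentiableAt ℝ a₂ y := fun y hy =>
    (ha₂.differentiableOn (by norm_num)).differentiableAt (hO.mem_nhds hy)
  have hw' : w = fun y => Complex.exp ((1/2 : ℂ) * (a₁ y - a₂ y)) := by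
    funext y
    rw [hw y]
    congr 1
    ring
  have pdw : ∀ y ∈ O, ∀ j, pd j w y = w y * ((1/2 : ℂ) * (pd j a₁ y - pd j a₂ y)) := by
    intro y hy j
    have ds : DifferentiableAt ℝ (fun y => a₁ y - a₂ y) y := (d₁ y hy).sub (d₂ y hy)
    rw [hw', pd_cexp (ds.const_mul _), pd_const_mul ds, pd_sub (d₁ y hy) (d₂ y hy)]
  have hgw : ∀ y ∈ O, g y * w y = Complex.exp ((1/2 : ℂ) * (a₁ y + a₂ y)) := by
    intro y hy
    rw [← hg y hy, hw y, ← Complex.exp_add]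
    congr 1
    ring
  have key : ∀ j, pd j (fun y => g y * (-Complex.I * pd j w y)) x =
      (-Complex.I / 2) * (g x * w x * (pd j (fun y => pd j a₁ y) x - pd j (fun y => pd j a₂ y) x)
        + (pd j a₁ x - pd j a₂ x) * (g x * w x * ((1/2 : ℂ) * (pd j a₁ x + pd j a₂ x)))) := by
    intro j
    have hev : (fun y => g y * (-Complex.I * pd j w y)) =ᶠ[𝓝 x]
        fun y => (-Complex.I / 2) *
          (Complex.exp ((1/2 : ℂ) * (a₁ y + a₂ y)) * (pd j a₁ y - pd j a₂ y)) := by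
      filter_upwards [hO.mem_nhds hx] with y hy
      rw [pdw y hy j, ← hgw y hy]
      ring
    have p₁ := pd_differentiableAt hO ha₁ hx j
    have p₂ := pd_differentiableAt hO ha₂ hx j
    have ds : DifferentiableAt ℝ (fun y => a₁ y + a₂ y) x := (d₁ x hx).add (d₂ x hx)
    have dc : DifferentiableAt ℝ (fun y => (1/2 : ℂ) * (a₁ y + a₂ y)) x := ds.const_mul _
    have de : DifferentiableAt ℝ (fun y => Complex.exp ((1/2 : ℂ) * (a₁ y + a₂ y))) x := dc.cexp
    have dp : DifferentiableAt ℝ (fun y => pd j a₁ y - pd j a₂ y) x := p₁.sub p₂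
    rw [pd_congr hev, pd_const_mul (f := fun y => Complex.exp ((1/2 : ℂ) * (a₁ y + a₂ y)) *
      (pd j a₁ y - pd j a₂ y)) (de.mul dp), pd_mul de dp, pd_sub p₁ p₂, pd_cexp dc,
      pd_const_mul ds, pd_add (d₁ x hx) (d₂ x hx), hgw x hx]
  unfold Ddiva lapC dotC Dg
  simp only [key, Fin.sum_univ_three]
  linear_combination (g x * w x / 2 * (
      (pd 0 (fun y => pd 0 a₁ y) x - pd 0 (fun y => pd 0 a₂ y) x)
    + (pd 1 (fun y => pd 1 a₁ y) x - pd 1 (fun y => pd 1 a₂ y) x)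
    + (pd 2 (fun y => pd 2 a₁ y) x - pd 2 (fun y => pd 2 a₂ y) x))) * Complex.I_sq

/-- One equation of the system, with `(g, w)` standing for `(γ₂, u)` or `(μ₂, v)`, and `(m, z)`
for the other pair. -/
theorem semilinear_of_identity {O : Set V3} (hO : IsOpen O) {W : ℂ}
    {a₁ a₂ b₁ b₂ g₁ g m₁ m w z : V3 → ℂ}
    (ha₁ : ContDiffOn ℝ 2 a₁ O) (ha₂ : ContDiffOn ℝ 2 a₂ O)
    (hg₁ : ∀ x ∈ O, Complex.exp (a₁ x) = g₁ x) (hg : ∀ x ∈ O, Complex.exp (a₂ x) = g x)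
    (hm₁ : ∀ x ∈ O, Complex.exp (b₁ x) = m₁ x) (hm : ∀ x ∈ O, Complex.exp (b₂ x) = m x)
    (hw : ∀ x, w x = Complex.exp ((a₁ x - a₂ x) / 2))
    (hz : ∀ x, z x = Complex.exp ((b₁ x - b₂ x) / 2)) {x : V3} (hx : x ∈ O)
    (h : -(1/2 : ℂ) * (lapC a₁ x - lapC a₂ x)
        + (1/4 : ℂ) * dotC (fun i => Dg a₁ x i + Dg a₂ x i) (fun i => Dg a₁ x i - Dg a₂ x i)
        + W * (m₁ x * g₁ x - m x * g x) = 0) :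
    Ddiva g w x + W * m x * (g x) ^ 2 * ((w x) ^ 2 * (z x) ^ 2 - 1) * w x = 0 := by
  have e₁ : g x * (w x) ^ 2 = g₁ x := by
    rw [← hg x hx, ← hg₁ x hx, hw x, ← Complex.exp_nat_mul, ← Complex.exp_add]
    congr 1
    push_cast
    ring
  have e₂ : m x * (z x) ^ 2 = m₁ x := by
    rw [← hm x hx, ← hm₁ x hx, hz x, ← Complex.exp_nat_mul, ← Complex.exp_add]
    congr 1
    push_cast
    ring
  rw [Ddiva_exp hO ha₁ ha₂ hg hw hx]
  rw [← e₁, ← e₂] at h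
  linear_combination (g x * w x) * h

/-- derivation of the semilinear elliptic system for
`u = (γ₁/γ₂)^{1/2} = exp((α₁-α₂)/2)` and `v = (μ₁/μ₂)^{1/2} = exp((β₁-β₂)/2)` from the
two scalar identities obtained in the recovery of the coefficients. -/
theorem semilinear_system_derivation
    (O : Set V3) (hO : IsOpen O) (ω : ℝ) (hω : 0 < ω)
    (γ₁ γ₂ μ₁ μ₂ α₁ α₂ β₁ β₂ : V3 → ℂ)
    (hγ₁ : ContDiffOn ℝ 2 γ₁ O) (hγ₂ : ContDiffOn ℝ 2 γ₂ O)
    (hμ₁ : ContDiffOn ℝ 2 μ₁ O) (hμ₂ : ContDiffOn ℝ 2 μ₂ O)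
    (hγ₁0 : ∀ x ∈ O, γ₁ x ≠ 0) (hγ₂0 : ∀ x ∈ O, γ₂ x ≠ 0)
    (hμ₁0 : ∀ x ∈ O, μ₁ x ≠ 0) (hμ₂0 : ∀ x ∈ O, μ₂ x ≠ 0)
    -- chosen logarithms `α_j = log γ_j`, `β_j = log μ_j`
    (hα₁ : ContDiffOn ℝ 2 α₁ O) (hα₂ : ContDiffOn ℝ 2 α₂ O)
    (hβ₁ : ContDiffOn ℝ 2 β₁ O) (hβ₂ : ContDiffOn ℝ 2 β₂ O)
    (heα₁ : ∀ x ∈ O, Complex.exp (α₁ x) = γ₁ x) (heα₂ : ∀ x ∈ O, Complex.exp (α₂ x) = γ₂ x)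
    (heβ₁ : ∀ x ∈ O, Complex.exp (β₁ x) = μ₁ x) (heβ₂ : ∀ x ∈ O, Complex.exp (β₂ x) = μ₂ x)
    -- consistently chosen square roots `u = (γ₁/γ₂)^{1/2}`, `v = (μ₁/μ₂)^{1/2}`
    (u v : V3 → ℂ)
    (hu : ∀ x, u x = Complex.exp ((α₁ x - α₂ x) / 2))
    (hv : ∀ x, v x = Complex.exp ((β₁ x - β₂ x) / 2))
    -- the two scalar identities
    (h1 : ∀ x ∈ O,
      -(1/2 : ℂ) * (lapC α₁ x - lapC α₂ x)
        + (1/4 : ℂ) * dotC (fun i => Dg α₁ x i + Dg α₂ x i) (fun i => Dg α₁ x i - Dg α₂ x i)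
        + ((ω : ℂ)) ^ 2 * (μ₁ x * γ₁ x - μ₂ x * γ₂ x) = 0)
    (h2 : ∀ x ∈ O,
      -(1/2 : ℂ) * (lapC β₁ x - lapC β₂ x)
        + (1/4 : ℂ) * dotC (fun i => Dg β₁ x i + Dg β₂ x i) (fun i => Dg β₁ x i - Dg β₂ x i)
        + ((ω : ℂ)) ^ 2 * (μ₁ x * γ₁ x - μ₂ x * γ₂ x) = 0) :
    -- the semilinear elliptic system
    ∀ x ∈ O,
      Ddiva γ₂ u x + ((ω : ℂ)) ^ 2 * μ₂ x * (γ₂ x) ^ 2 * ((u x) ^ 2 * (v x) ^ 2 - 1) * u x = 0 ∧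
      Ddiva μ₂ v x + ((ω : ℂ)) ^ 2 * (μ₂ x) ^ 2 * γ₂ x * ((u x) ^ 2 * (v x) ^ 2 - 1) * v x = 0 := by
  intro x hx
  refine ⟨semilinear_of_identity hO hα₁ hα₂ heα₁ heα₂ heβ₁ heβ₂ hu hv hx (h1 x hx), ?_⟩
  have h := h2 x hx
  rw [mul_comm (μ₁ x), mul_comm (μ₂ x)] at h
  have := semilinear_of_identity hO hβ₁ hβ₂ heβ₁ heβ₂ heα₁ heα₂ hv hu hx h
  linear_combination this

end
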